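/- The function b: ℝ⁸ → ℂ defined below is a Schwartz function and is a −1-eigenfunction of the Fourier transform: b̂(x) = −b(x) for all x ∈ ℝ⁸. -/

import Mathlib

open MeasureTheory FourierTransform

/-- The theta constant `θ00`. -/
noncomputable def theta00 (z : ℂ) : ℂ :=
  ∑' n : ℤ, Complex.exp ((Real.pi : ℂ) * Complex.I * (n : ℂ) ^ 2 * z)

/-- The theta constant `θ01`. -/
noncomputable def theta01 (z : ℂ) : ℂ :=
  ∑' n : ℤ, (-1 : ℂ) ^ n * Complex.exp ((Real.pi : ℂ) * Complex.I * (n : ℂ) ^ 2 * z)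

/-- The theta constant `θ10`. -/
noncomputable def theta10 (z : ℂ) : ℂ :=
  ∑' n : ℤ, Complex.exp ((Real.pi : ℂ) * Complex.I * ((n : ℂ) + 1/2) ^ 2 * z)

/-- `ψ_I = 128(θ00⁴+θ01⁴)/θ10⁸ + 128(θ01⁴−θ10⁴)/θ00⁸`. -/
noncomputable def psiI (z : ℂ) : ℂ :=
  128 * (theta00 z ^ 4 + theta01 z ^ 4) / theta10 z ^ 8 +
    128 * (theta01 z ^ 4 - theta10 z ^ 4) / theta00 z ^ 8

/-- `ψ_T = 128(θ00⁴+θ01⁴)/θ10⁸ + 128(θ00⁴+θ10⁴)/θ01⁸`. -/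
noncomputable def psiT (z : ℂ) : ℂ :=
  128 * (theta00 z ^ 4 + theta01 z ^ 4) / theta10 z ^ 8 +
    128 * (theta00 z ^ 4 + theta10 z ^ 4) / theta01 z ^ 8

/-- `ψ_S = −128(θ00⁴+θ10⁴)/θ01⁸ − 128(θ10⁴−θ01⁴)/θ00⁸`. -/
noncomputable def psiS (z : ℂ) : ℂ :=
  -128 * (theta00 z ^ 4 + theta10 z ^ 4) / theta01 z ^ 8 -
    128 * (theta10 z ^ 4 - theta01 z ^ 4) / theta00 z ^ 8
/-- Contour integral of `F` along the straight-line segment from `z₁` to `z₂`. -/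
noncomputable def segInt (z₁ z₂ : ℂ) (F : ℂ → ℂ) : ℂ :=
  (z₂ - z₁) * ∫ t in (0:ℝ)..1, F (z₁ + (t : ℂ) * (z₂ - z₁))

/-- Contour integral of `F` along the vertical ray from `c·i` to `i∞`. -/
noncomputable def rayIntFrom (c : ℝ) (F : ℂ → ℂ) : ℂ :=
  Complex.I * ∫ t in Set.Ioi c, F (Complex.I * (t : ℂ))
/-- The radial profile of the `−1`-eigenfunction `b`: the value of `b` on vectors of norm `r`. -/
noncomputable def bRad (r : ℝ) : ℂ :=
  segInt (-1) Complex.I (fun z => psiT z * Complex.exp ((Real.pi:ℂ) * Complex.I * (r:ℂ)^2 * z))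
    + segInt 1 Complex.I (fun z => psiT z * Complex.exp ((Real.pi:ℂ) * Complex.I * (r:ℂ)^2 * z))
    - 2 * segInt 0 Complex.I (fun z => psiI z * Complex.exp ((Real.pi:ℂ) * Complex.I * (r:ℂ)^2 * z))
    - 2 * rayIntFrom 1 (fun z => psiS z * Complex.exp ((Real.pi:ℂ) * Complex.I * (r:ℂ)^2 * z))

/-- The radial function `b : ℝ⁸ → ℂ`. -/
noncomputable def bFn (x : EuclideanSpace ℝ (Fin 8)) : ℂ := bRad ‖x‖

/-!
Let `g` be the part of `b` given by the integral of `ψ_T` from `-1` to `i` minus twice the integral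
of `ψ_I` from `0` to `i`. It is a superposition of the complex Gaussians `e^{πi‖x‖²z}`, and since
`ψ_S` decays exponentially at `i∞`, the functions `ψ_I` and `ψ_T` decay exponentially at the cusps
`0` and `-1` where these contours start; hence `g` is a Schwartz function.

On `ℝ⁸` the Fourier transform replaces `e^{πi‖x‖²z}` by `z⁻⁴ e^{πi‖x‖²(-1/z)}`. Under `z ↦ -1/z`
the form `ψ_T` of weight `-2` is invariant up to sign and `ψ_I` becomes `ψ_S`, the segment from `-1`
to `i` becomes an arc homotopic to the segment from `1` to `i`, and the segment from `0` to `i`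
becomes the ray from `i` to `i∞`. The two remaining integrals in `b` therefore make up `-𝓕 g`, so
that `b = g - 𝓕 g`, and `𝓕 (𝓕 g) = g` because `g` is even.
-/

open Set Filter Topology Asymptotics
open scoped Real ContDiff SchwartzMap
open Complex (I)

section RadialSchwartz

variable {V E : Type*} [NormedAddCommGroup V] [InnerProductSpace ℝ V]
  [NormedAddCommGroup E] [NormedSpace ℝ E] {f : ℝ → E}

theorem one_add_pow_le_two_pow_mul {r : ℝ} (hr : 0 ≤ r) (k : ℕ) :
    (1 + r) ^ k ≤ 2 ^ k * (1 + (r ^ 2) ^ k) := by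
  rcases le_total r 1 with h | h
  · calc (1 + r) ^ k ≤ 2 ^ k := by gcongr; linarith
      _ ≤ 2 ^ k * (1 + (r ^ 2) ^ k) := le_mul_of_one_le_right (by positivity) <|
        le_add_of_nonneg_right (by positivity)
  · calc (1 + r) ^ k ≤ (2 * r ^ 2) ^ k := by gcongr; nlinarith
      _ = 2 ^ k * (r ^ 2) ^ k := mul_pow ..
      _ ≤ 2 ^ k * (1 + (r ^ 2) ^ k) := by gcongr; linarith

theorem exists_one_add_pow_mul_norm_iteratedDeriv_sq_le
    (hdecay : ∀ n M : ℕ, ∃ C, ∀ u, 0 ≤ u → u ^ M * ‖iteratedDeriv n f u‖ ≤ C) (n k : ℕ) :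
    ∃ C, ∀ i ≤ n, ∀ r, 0 ≤ r → (1 + r) ^ k * ‖iteratedDeriv i f (r ^ 2)‖ ≤ C := by
  choose C hC using hdecay
  have hC_nonneg (i M : ℕ) : 0 ≤ C i M :=
    le_trans (by positivity) (hC i M 1 zero_le_one)
  refine ⟨∑ i ∈ Finset.range (n + 1), 2 ^ k * (C i 0 + C i k), fun i hi r hr => ?_⟩
  calc (1 + r) ^ k * ‖iteratedDeriv i f (r ^ 2)‖
      ≤ 2 ^ k * (1 + (r ^ 2) ^ k) * ‖iteratedDeriv i f (r ^ 2)‖ := by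
        gcongr; exact one_add_pow_le_two_pow_mul hr k
    _ = 2 ^ k * ((r ^ 2) ^ 0 * ‖iteratedDeriv i f (r ^ 2)‖
          + (r ^ 2) ^ k * ‖iteratedDeriv i f (r ^ 2)‖) := by ring
    _ ≤ 2 ^ k * (C i 0 + C i k) := by
        gcongr
        · exact hC i 0 _ (sq_nonneg r)
        · exact hC i k _ (sq_nonneg r)
    _ ≤ ∑ i ∈ Finset.range (n + 1), 2 ^ k * (C i 0 + C i k) :=
        Finset.single_le_sum (f := fun i => 2 ^ k * (C i 0 + C i k))
          (fun j _ => mul_nonneg (by positivity) (add_nonneg (hC_nonneg j 0) (hC_nonneg j k)))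
          (Finset.mem_range_succ_iff.2 hi)

theorem exists_norm_pow_mul_norm_iteratedFDeriv_comp_norm_sq_le (hf : ContDiff ℝ ∞ f)
    (hdecay : ∀ n M : ℕ, ∃ C, ∀ u, 0 ≤ u → u ^ M * ‖iteratedDeriv n f u‖ ≤ C) (k n : ℕ) :
    ∃ C, ∀ x : V, ‖x‖ ^ k * ‖iteratedFDeriv ℝ n (f ∘ fun x : V => ‖x‖ ^ 2) x‖ ≤ C := by
  have hsq := Function.hasTemperateGrowth_norm_sq V
  obtain ⟨l, C, hC, hD⟩ := hsq.norm_iteratedFDeriv_le_uniform n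
  obtain ⟨C', hC'⟩ := exists_one_add_pow_mul_norm_iteratedDeriv_sq_le hdecay n (k + l * n)
  refine ⟨n.factorial * C' * (1 + C) ^ n, fun x => ?_⟩
  have hx : 1 ≤ 1 + ‖x‖ := le_add_of_nonneg_right (norm_nonneg x)
  have hx_pow : 1 ≤ (1 + ‖x‖) ^ l := one_le_pow₀ hx
  have hcomp := norm_iteratedFDeriv_comp_le hf hsq.1 (by exact_mod_cast le_top) x (n := n)
    (C := C' / (1 + ‖x‖) ^ (k + l * n)) (D := (1 + C) * (1 + ‖x‖) ^ l)
    (fun i hi => by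
      rw [norm_iteratedFDeriv_eq_norm_iteratedDeriv, le_div_iff₀' (by positivity)]
      exact hC' i hi _ (norm_nonneg x))
    (fun i hi hin => (hD i hin x).trans <| calc
      C * (1 + ‖x‖) ^ l ≤ (1 + C) * (1 + ‖x‖) ^ l := by gcongr; linarith
      _ ≤ ((1 + C) * (1 + ‖x‖) ^ l) ^ i :=
        le_self_pow₀ (one_le_mul_of_one_le_of_one_le (by linarith) hx_pow) (by lia))
  calc ‖x‖ ^ k * ‖iteratedFDeriv ℝ n (f ∘ fun x : V => ‖x‖ ^ 2) x‖
      ≤ (1 + ‖x‖) ^ k * (n.factorial * (C' / (1 + ‖x‖) ^ (k + l * n)) *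
          ((1 + C) * (1 + ‖x‖) ^ l) ^ n) := by gcongr; linarith
    _ = n.factorial * C' * (1 + C) ^ n := by
        rw [mul_pow, ← pow_mul, pow_add]
        field_simp

variable (V) in
/-- The radial Schwartz function `x ↦ f (‖x‖ ^ 2)` with profile `f`. Only the decay of the
derivatives of `f` on the half-line `[0, ∞)` matters. -/
def radialSchwartz (f : ℝ → E) (hf : ContDiff ℝ ∞ f)
    (hdecay : ∀ n M : ℕ, ∃ C, ∀ u, 0 ≤ u → u ^ M * ‖iteratedDeriv n f u‖ ≤ C) : 𝓢(V, E) where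
  toFun := f ∘ fun x => ‖x‖ ^ 2
  smooth' := hf.comp (Function.hasTemperateGrowth_norm_sq V).1
  decay' := exists_norm_pow_mul_norm_iteratedFDeriv_comp_norm_sq_le hf hdecay

end RadialSchwartz

section SchwartzFourier

variable {V E : Type*} [NormedAddCommGroup V] [InnerProductSpace ℝ V] [FiniteDimensional ℝ V]
  [MeasurableSpace V] [BorelSpace V] [NormedAddCommGroup E] [NormedSpace ℂ E]

theorem schwartz_fourier_sub (f g : 𝓢(V, E)) : 𝓕 (f - g) = 𝓕 f - 𝓕 g :=
  map_sub (FourierTransform.fourierCLM ℂ 𝓢(V, E)) f g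

theorem schwartz_fourier_fourier_of_even [CompleteSpace E] {f : 𝓢(V, E)}
    (hf : ∀ x, f (-x) = f x) : 𝓕 (𝓕 f) = f := by
  have heven : 𝓕⁻ f = 𝓕 f := by
    ext x
    rw [SchwartzMap.fourierInv_coe, SchwartzMap.fourier_coe, Real.fourierInv_eq_fourier_comp_neg]
    simp only [hf]
  rw [← heven, FourierTransform.fourier_fourierInv_eq]

theorem schwartz_fourier_sub_fourier_of_even [CompleteSpace E] {f : 𝓢(V, E)}
    (hf : ∀ x, f (-x) = f x) : 𝓕 (f - 𝓕 f) = -(f - 𝓕 f) := by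
  rw [schwartz_fourier_sub, schwartz_fourier_fourier_of_even hf, neg_sub]

end SchwartzFourier

section GaussianMixture

variable {α : Type*} [MeasurableSpace α] {μ : Measure α} {φ γ : α → ℂ}

theorem norm_cexp_pi_mul_I (u : ℝ) (w : ℂ) :
    ‖Complex.exp (π * I * u * w)‖ = Real.exp (-(π * u * w.im)) := by
  simp [Complex.norm_exp]

/-- The superposition `u ↦ ∫ φ(t) e^{πi u γ(t)} dμ(t)`. At `u = ‖x‖ ^ 2` this is a superposition
of the complex Gaussians `e^{πi‖x‖² w}`, the shape of each contour integral defining `b`. -/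
noncomputable def gaussianMixture (μ : Measure α) (φ γ : α → ℂ) (u : ℝ) : ℂ :=
  ∫ t, φ t * Complex.exp (π * I * u * γ t) ∂μ

/-- The weight `φ` is so small where the frequency `γ` approaches the real axis that the
superposition `gaussianMixture μ φ γ` is smooth and rapidly decreasing on `[0, ∞)`. -/
structure IsCuspidalWeight (μ : Measure α) (φ γ : α → ℂ) : Prop where
  aestronglyMeasurable : AEStronglyMeasurable φ μ
  aemeasurable : AEMeasurable γ μ
  im_pos : ∀ᵐ t ∂μ, 0 < (γ t).im
  exists_norm_le : ∃ R, ∀ᵐ t ∂μ, ‖γ t‖ ≤ R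
  integrable_moment (M : ℕ) : Integrable (fun t => ‖φ t‖ * (γ t).im⁻¹ ^ M) μ

namespace IsCuspidalWeight

theorem integrable (h : IsCuspidalWeight μ φ γ) : Integrable φ μ :=
  (integrable_norm_iff h.aestronglyMeasurable).1 <| by simpa using h.integrable_moment 0

theorem mul_frequency (h : IsCuspidalWeight μ φ γ) :
    IsCuspidalWeight μ (fun t => φ t * (π * I * γ t)) γ where
  aestronglyMeasurable :=
    h.aestronglyMeasurable.mul (h.aemeasurable.const_mul _).aestronglyMeasurable
  aemeasurable := h.aemeasurable
  im_pos := h.im_pos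
  exists_norm_le := h.exists_norm_le
  integrable_moment M := by
    obtain ⟨R, hR⟩ := h.exists_norm_le
    refine ((h.integrable_moment M).bdd_mul (f := fun t => ‖π * I * γ t‖)
      (h.aemeasurable.const_mul _).norm.aestronglyMeasurable (c := π * R) ?_).congr
        (.of_forall fun t => ?_)
    · filter_upwards [hR] with t ht
      simpa [abs_of_pos Real.pi_pos] using mul_le_mul_of_nonneg_left ht Real.pi_pos.le
    · simp only [norm_mul]; ring

theorem aestronglyMeasurable_mul_cexp (h : IsCuspidalWeight μ φ γ) (u : ℝ) :
    AEStronglyMeasurable (fun t => φ t * Complex.exp (π * I * u * γ t)) μ :=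
  h.aestronglyMeasurable.mul (h.aemeasurable.const_mul _).cexp.aestronglyMeasurable

theorem exists_norm_mul_cexp_le (h : IsCuspidalWeight μ φ γ) (B : ℝ) :
    ∃ C, ∀ᵐ t ∂μ, ∀ u, |u| ≤ B → ‖φ t * Complex.exp (π * I * u * γ t)‖ ≤ C * ‖φ t‖ := by
  obtain ⟨R, hR⟩ := h.exists_norm_le
  refine ⟨Real.exp (π * B * R), ?_⟩
  filter_upwards [hR] with t ht u hu
  rw [norm_mul, norm_cexp_pi_mul_I, mul_comm]
  gcongr
  calc -(π * u * (γ t).im) ≤ |π * u * (γ t).im| := neg_le_abs _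
    _ = π * |u| * |(γ t).im| := by rw [abs_mul, abs_mul, abs_of_pos Real.pi_pos]
    _ ≤ π * B * R := by
        gcongr
        · exact mul_nonneg Real.pi_pos.le ((abs_nonneg u).trans hu)
        · exact (Complex.abs_im_le_norm _).trans ht

theorem integrable_mul_cexp (h : IsCuspidalWeight μ φ γ) (u : ℝ) :
    Integrable (fun t => φ t * Complex.exp (π * I * u * γ t)) μ := by
  obtain ⟨C, hC⟩ := h.exists_norm_mul_cexp_le |u|
  exact (h.integrable.norm.const_mul C).mono' (h.aestronglyMeasurable_mul_cexp u)
    (hC.mono fun t ht => ht u le_rfl)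

theorem hasDerivAt_gaussianMixture (h : IsCuspidalWeight μ φ γ) (u : ℝ) :
    HasDerivAt (gaussianMixture μ φ γ)
      (gaussianMixture μ (fun t => φ t * (π * I * γ t)) γ u) u := by
  obtain ⟨C, hC⟩ := h.mul_frequency.exists_norm_mul_cexp_le (|u| + 1)
  refine (hasDerivAt_integral_of_dominated_loc_of_deriv_le (Metric.ball_mem_nhds u one_pos)
    (.of_forall h.aestronglyMeasurable_mul_cexp) (h.integrable_mul_cexp u)
    (h.mul_frequency.aestronglyMeasurable_mul_cexp u) (hC.mono fun t ht v hv => ht v ?_)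
    (h.mul_frequency.integrable.norm.const_mul C) (.of_forall fun t v _ => ?_)).2
  · rw [Metric.mem_ball, Real.dist_eq] at hv
    linarith [abs_sub_abs_le_abs_sub v u]
  · have hlin : HasDerivAt (fun v : ℝ => π * I * (v : ℂ) * γ t) (π * I * γ t) v := by
      simpa using (((hasDerivAt_id (v : ℂ)).comp_ofReal).const_mul (π * I)).mul_const (γ t)
    exact (hlin.cexp.const_mul (φ t)).congr_deriv (by ring)

theorem differentiable_gaussianMixture (h : IsCuspidalWeight μ φ γ) :
    Differentiable ℝ (gaussianMixture μ φ γ) :=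
  fun u => (h.hasDerivAt_gaussianMixture u).differentiableAt

theorem deriv_gaussianMixture (h : IsCuspidalWeight μ φ γ) :
    deriv (gaussianMixture μ φ γ) = gaussianMixture μ (fun t => φ t * (π * I * γ t)) γ :=
  funext fun u => (h.hasDerivAt_gaussianMixture u).deriv

theorem contDiff_gaussianMixture (h : IsCuspidalWeight μ φ γ) :
    ContDiff ℝ ∞ (gaussianMixture μ φ γ) := by
  refine contDiff_infty.2 fun n => ?_
  induction n generalizing φ with
  | zero => exact contDiff_zero.2 h.differentiable_gaussianMixture.continuous
  | succ n ih =>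
    rw [Nat.cast_succ, contDiff_succ_iff_deriv, h.deriv_gaussianMixture]
    exact ⟨h.differentiable_gaussianMixture, by simp, ih h.mul_frequency⟩

theorem exists_pow_mul_norm_gaussianMixture_le (h : IsCuspidalWeight μ φ γ) (M : ℕ) :
    ∃ C, ∀ u, 0 ≤ u → u ^ M * ‖gaussianMixture μ φ γ u‖ ≤ C := by
  refine ⟨∫ t, M.factorial * (‖φ t‖ * (γ t).im⁻¹ ^ M) ∂μ, fun u hu => ?_⟩
  calc u ^ M * ‖gaussianMixture μ φ γ u‖
      = ‖∫ t, u ^ M • (φ t * Complex.exp (π * I * u * γ t)) ∂μ‖ := by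
        rw [integral_smul, norm_smul, Real.norm_of_nonneg (by positivity), gaussianMixture]
    _ ≤ ∫ t, M.factorial * (‖φ t‖ * (γ t).im⁻¹ ^ M) ∂μ := ?_
  refine norm_integral_le_of_norm_le ((h.integrable_moment M).const_mul _) ?_
  filter_upwards [h.im_pos] with t ht
  have hexp : u ^ M * Real.exp (-(π * u * (γ t).im)) ≤ M.factorial * (γ t).im⁻¹ ^ M := by
    have hpow : (u * (γ t).im) ^ M / M.factorial ≤ Real.exp (π * u * (γ t).im) :=
      (Real.pow_div_factorial_le_exp _ (by positivity) M).trans <| Real.exp_le_exp.2 <| by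
        have : 0 ≤ u * (γ t).im := by positivity
        nlinarith [Real.pi_gt_three]
    rw [Real.exp_neg, ← div_eq_mul_inv, div_le_iff₀ (Real.exp_pos _)]
    calc u ^ M = M.factorial * (γ t).im⁻¹ ^ M * ((u * (γ t).im) ^ M / M.factorial) := by
          rw [mul_pow, inv_pow]; field_simp
      _ ≤ M.factorial * (γ t).im⁻¹ ^ M * Real.exp (π * u * (γ t).im) := by gcongr
  calc ‖u ^ M • (φ t * Complex.exp (π * I * u * γ t))‖
      = ‖φ t‖ * (u ^ M * Real.exp (-(π * u * (γ t).im))) := by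
        rw [norm_smul, norm_mul, norm_cexp_pi_mul_I, Real.norm_of_nonneg (by positivity)]; ring
    _ ≤ ‖φ t‖ * (M.factorial * (γ t).im⁻¹ ^ M) := by gcongr
    _ = M.factorial * (‖φ t‖ * (γ t).im⁻¹ ^ M) := by ring

theorem exists_pow_mul_norm_iteratedDeriv_gaussianMixture_le (h : IsCuspidalWeight μ φ γ)
    (n M : ℕ) : ∃ C, ∀ u, 0 ≤ u → u ^ M * ‖iteratedDeriv n (gaussianMixture μ φ γ) u‖ ≤ C := by
  induction n generalizing φ with
  | zero => simpa using h.exists_pow_mul_norm_gaussianMixture_le M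
  | succ n ih =>
    rw [iteratedDeriv_succ', h.deriv_gaussianMixture]
    exact ih h.mul_frequency

/-- The Schwartz function `x ↦ ∫ φ(t) e^{πi‖x‖² γ(t)} dμ(t)` on `V`. -/
noncomputable def schwartz (h : IsCuspidalWeight μ φ γ) (V : Type*) [NormedAddCommGroup V]
    [InnerProductSpace ℝ V] : 𝓢(V, ℂ) :=
  radialSchwartz V (gaussianMixture μ φ γ) h.contDiff_gaussianMixture
    h.exists_pow_mul_norm_iteratedDeriv_gaussianMixture_le

theorem schwartz_apply (h : IsCuspidalWeight μ φ γ) {V : Type*} [NormedAddCommGroup V]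
    [InnerProductSpace ℝ V] (x : V) : h.schwartz V x = gaussianMixture μ φ γ (‖x‖ ^ 2) :=
  rfl

end IsCuspidalWeight

end GaussianMixture

section GaussianFourier

variable {V : Type*} [NormedAddCommGroup V] [InnerProductSpace ℝ V] [FiniteDimensional ℝ V]
  [MeasurableSpace V] [BorelSpace V]

theorem fourier_cexp_pi_mul_I_norm_sq {w : ℂ} (hw : 0 < w.im) (y : V) :
    𝓕 (fun x : V => Complex.exp (π * I * (‖x‖ ^ 2 : ℝ) * w)) y =
      (I / w) ^ (Module.finrank ℝ V / 2 : ℂ) *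
        Complex.exp (π * I * (‖y‖ ^ 2 : ℝ) * (-1 / w)) := by
  have hw_ne : w ≠ 0 := by rintro rfl; simp at hw
  have hre : 0 < (-(π * I * w)).re := by simpa using mul_pos Real.pi_pos hw
  have hexponent (x : V) : (π * I * (‖x‖ ^ 2 : ℝ) * w : ℂ) = -(-(π * I * w)) * ‖x‖ ^ 2 := by
    push_cast; ring
  simp_rw [hexponent, fourier_gaussian_innerProductSpace hre y]
  congr 2
  · field_simp; simp
  · push_cast; field_simp; simp

theorem integral_rexp_neg_pi_mul_norm_sq {s : ℝ} (hs : 0 < s) :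
    ∫ x : V, Real.exp (-(π * ‖x‖ ^ 2 * s)) = s⁻¹ ^ (Module.finrank ℝ V / 2 : ℝ) := by
  have hexponent (x : V) : -(π * ‖x‖ ^ 2 * s) = -(π * s) * ‖x‖ ^ 2 := by ring
  simp_rw [hexponent, GaussianFourier.integral_rexp_neg_mul_sq_norm (mul_pos Real.pi_pos hs)]
  congr 1
  field_simp

theorem integrable_rexp_neg_pi_mul_norm_sq {s : ℝ} (hs : 0 < s) :
    Integrable fun x : V => Real.exp (-(π * ‖x‖ ^ 2 * s)) :=
  .of_integral_ne_zero <| by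
    rw [integral_rexp_neg_pi_mul_norm_sq hs]; positivity

theorem rpow_half_le_one_add_pow {x : ℝ} (hx : 0 ≤ x) (d : ℕ) :
    x ^ (d / 2 : ℝ) ≤ 1 + x ^ d := by
  have hsq : (x ^ (d / 2 : ℝ)) ^ 2 = x ^ d := by
    rw [← Real.rpow_mul_natCast hx, ← Real.rpow_natCast]; congr 1; push_cast; ring
  nlinarith [sq_nonneg (x ^ (d / 2 : ℝ) - 1)]

namespace IsCuspidalWeight

variable {α : Type*} [MeasurableSpace α] {μ : Measure α} {φ γ : α → ℂ}

theorem integrable_prod_gaussian [SFinite μ] (h : IsCuspidalWeight μ φ γ) :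
    Integrable (fun p : V × α => φ p.2 * Complex.exp (π * I * (‖p.1‖ ^ 2 : ℝ) * γ p.2))
      (volume.prod μ) := by
  have hnorm (x : V) (t : α) : ‖φ t * Complex.exp (π * I * (‖x‖ ^ 2 : ℝ) * γ t)‖ =
      ‖φ t‖ * Real.exp (-(π * ‖x‖ ^ 2 * (γ t).im)) := by
    rw [norm_mul, norm_cexp_pi_mul_I]
  have hsq : AEMeasurable (fun p : V × α => (π * I * (‖p.1‖ ^ 2 : ℝ) : ℂ)) (volume.prod μ) := by
    fun_prop
  have hmeas : AEStronglyMeasurable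
      (fun p : V × α => φ p.2 * Complex.exp (π * I * (‖p.1‖ ^ 2 : ℝ) * γ p.2))
      (volume.prod μ) :=
    h.aestronglyMeasurable.comp_snd.mul (hsq.mul h.aemeasurable.comp_snd).cexp.aestronglyMeasurable
  refine (integrable_prod_iff' hmeas).2 ⟨?_, ?_⟩
  · filter_upwards [h.im_pos] with t ht
    refine ((integrable_rexp_neg_pi_mul_norm_sq ht).const_mul ‖φ t‖).mono'
      (Continuous.aestronglyMeasurable (by fun_prop)) (.of_forall fun x => (hnorm x t).le)
  · refine ((h.integrable_moment 0).add (h.integrable_moment (Module.finrank ℝ V))).mono'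
      hmeas.norm.prod_swap.integral_prod_right' ?_
    filter_upwards [h.im_pos] with t ht
    simp_rw [hnorm, integral_const_mul, integral_rexp_neg_pi_mul_norm_sq ht]
    rw [Real.norm_of_nonneg (by positivity), Pi.add_apply, pow_zero, ← mul_add]
    gcongr
    exact rpow_half_le_one_add_pow (inv_nonneg.2 ht.le) _

theorem fourier_schwartz_apply [SFinite μ] (h : IsCuspidalWeight μ φ γ) (y : V) :
    𝓕 (h.schwartz V) y =
      gaussianMixture μ (fun t => φ t * (I / γ t) ^ (Module.finrank ℝ V / 2 : ℂ))
        (fun t => -1 / γ t) (‖y‖ ^ 2) := by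
  have hint : Integrable (fun p : V × α => Real.fourierChar (-inner ℝ p.1 y) •
      (φ p.2 * Complex.exp (π * I * (‖p.1‖ ^ 2 : ℝ) * γ p.2))) (volume.prod μ) := by
    have hchar : Continuous fun x : V => (Real.fourierChar (-inner ℝ x y) : ℂ) := by fun_prop
    exact h.integrable_prod_gaussian.bdd_mul hchar.aestronglyMeasurable.comp_fst
      (.of_forall fun p => (Circle.norm_coe _).le)
  calc 𝓕 (h.schwartz V) y
      = ∫ x : V, ∫ t, Real.fourierChar (-inner ℝ x y) •
          (φ t * Complex.exp (π * I * (‖x‖ ^ 2 : ℝ) * γ t)) ∂μ := by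
        simp_rw [SchwartzMap.fourier_coe, Real.fourier_eq, h.schwartz_apply, gaussianMixture,
          Circle.smul_def, integral_smul]
    _ = ∫ t, (∫ x : V, Real.fourierChar (-inner ℝ x y) •
          (φ t * Complex.exp (π * I * (‖x‖ ^ 2 : ℝ) * γ t))) ∂μ :=
        integral_integral_swap hint
    _ = ∫ t, φ t * 𝓕 (fun x : V => Complex.exp (π * I * (‖x‖ ^ 2 : ℝ) * γ t)) y ∂μ := by
        simp_rw [Real.fourier_eq, ← mul_smul_comm, integral_const_mul]
    _ = _ := integral_congr_ae <| by
        filter_upwards [h.im_pos] with t ht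
        rw [fourier_cexp_pi_mul_I_norm_sq ht, ← mul_assoc]

end IsCuspidalWeight

end GaussianFourier

section ContourIntegrals

theorem exists_continuous_hasDerivAt_of_convex_of_bounded {U : Set ℂ} {F : ℂ → ℂ} {M : ℝ}
    (hU : Convex ℝ U) (hU_open : IsOpen U) (hF : DifferentiableOn ℂ F U)
    (hM : ∀ z ∈ U, ‖F z‖ ≤ M) :
    ∃ G : ℂ → ℂ, Continuous G ∧ ∀ z ∈ U, HasDerivAt G (F z) z := by
  obtain ⟨G₀, hG₀⟩ := hU.exists_forall_hasDerivWithinAt hF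
  have hLip : LipschitzOnWith M.toNNReal G₀ U :=
    hU.lipschitzOnWith_of_nnnorm_hasDerivWithin_le hG₀ fun z hz =>
      NNReal.le_toNNReal_of_coe_le (hM z hz)
  obtain ⟨G, hG_lip, hG⟩ := hLip.extend_finite_dimension
  refine ⟨G, hG_lip.continuous, fun z hz => ?_⟩
  have hz_nhds : U ∈ 𝓝 z := hU_open.mem_nhds hz
  exact ((hG₀ z hz).hasDerivAt hz_nhds).congr_of_eventuallyEq (hG.symm.eventuallyEq_of_mem hz_nhds)

theorem intervalIntegral_deriv_mul_comp_eq_sub {U : Set ℂ} {F G : ℂ → ℂ} {M : ℝ}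
    (hF : ContinuousOn F U) (hM : ∀ z ∈ U, ‖F z‖ ≤ M) (hG : Continuous G)
    (hGF : ∀ z ∈ U, HasDerivAt G (F z) z) {p p' : ℝ → ℂ} {a b : ℝ} (hab : a ≤ b)
    (hp : ContinuousOn p (Icc a b)) (hp' : ContinuousOn p' (Icc a b))
    (hderiv : ∀ t ∈ Ioo a b, HasDerivAt p (p' t) t) (hpU : MapsTo p (Ioo a b) U) :
    ∫ t in a..b, p' t * F (p t) = G (p b) - G (p a) := by
  refine intervalIntegral.integral_eq_sub_of_hasDerivAt_of_le hab (hG.comp_continuousOn hp)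
    (fun t ht => ?_) ?_
  · rw [mul_comm]
    exact (hGF _ (hpU ht)).comp t (hderiv t ht)
  · rw [intervalIntegrable_iff_integrableOn_Ioo_of_le hab]
    have hFp : ContinuousOn (F ∘ p) (Ioo a b) := hF.comp (hp.mono Ioo_subset_Icc_self) hpU
    exact (hp'.integrableOn_Icc.mono_set Ioo_subset_Icc_self).mul_bdd
      (hFp.aestronglyMeasurable measurableSet_Ioo)
      (ae_restrict_of_forall_mem measurableSet_Ioo fun t ht => hM _ (hpU ht))

theorem intervalIntegral_deriv_mul_comp_eq_of_endpoints_eq {U : Set ℂ} {F : ℂ → ℂ} {M : ℝ}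
    (hU : Convex ℝ U) (hU_open : IsOpen U) (hF : DifferentiableOn ℂ F U)
    (hM : ∀ z ∈ U, ‖F z‖ ≤ M) {p p' q q' : ℝ → ℂ} {a b : ℝ} (hab : a ≤ b)
    (hp : ContinuousOn p (Icc a b)) (hp' : ContinuousOn p' (Icc a b))
    (hp_deriv : ∀ t ∈ Ioo a b, HasDerivAt p (p' t) t) (hpU : MapsTo p (Ioo a b) U)
    (hq : ContinuousOn q (Icc a b)) (hq' : ContinuousOn q' (Icc a b))
    (hq_deriv : ∀ t ∈ Ioo a b, HasDerivAt q (q' t) t) (hqU : MapsTo q (Ioo a b) U)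
    (ha : p a = q a) (hb : p b = q b) :
    ∫ t in a..b, p' t * F (p t) = ∫ t in a..b, q' t * F (q t) := by
  obtain ⟨G, hG, hGF⟩ := exists_continuous_hasDerivAt_of_convex_of_bounded hU hU_open hF hM
  rw [intervalIntegral_deriv_mul_comp_eq_sub hF.continuousOn hM hG hGF hab hp hp' hp_deriv hpU,
    intervalIntegral_deriv_mul_comp_eq_sub hF.continuousOn hM hG hGF hab hq hq' hq_deriv hqU,
    ha, hb]

theorem setIntegral_Ioc_zero_inv_eq_setIntegral_Ioi {E : Type*} [NormedAddCommGroup E]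
    [NormedSpace ℝ E] (f : ℝ → E) {c : ℝ} (hc : 0 < c) :
    ∫ t in Ioc 0 c⁻¹, f t = ∫ s in Ioi c, (s ^ 2)⁻¹ • f s⁻¹ := by
  have himage : Ioo 0 c⁻¹ = (fun s : ℝ => s⁻¹) '' Ioi c := by
    rw [image_inv_eq_inv, inv_Ioi₀ hc]
  rw [integral_Ioc_eq_integral_Ioo, himage, integral_image_eq_integral_abs_deriv_smul
    measurableSet_Ioi (f' := fun s => -(s ^ 2)⁻¹)
    (fun s hs => (hasDerivAt_inv (hc.trans hs).ne').hasDerivWithinAt) inv_injective.injOn]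
  refine setIntegral_congr_fun measurableSet_Ioi fun s _ => ?_
  simp only [abs_neg, abs_of_nonneg (inv_nonneg.2 (sq_nonneg s))]

/-- The parametrisation by `[0, 1]` of the segment from `z₁` to `z₂` used in `segInt`. -/
def segPath (z₁ z₂ : ℂ) (t : ℝ) : ℂ := z₁ + t * (z₂ - z₁)

theorem continuous_segPath (z₁ z₂ : ℂ) : Continuous (segPath z₁ z₂) := by
  unfold segPath; fun_prop

theorem hasDerivAt_segPath (z₁ z₂ : ℂ) (t : ℝ) : HasDerivAt (segPath z₁ z₂) (z₂ - z₁) t := by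
  have h := ((hasDerivAt_id (t : ℂ)).comp_ofReal.mul_const (z₂ - z₁)).const_add z₁
  rwa [one_mul] at h

theorem segPath_im {x : ℂ} (hx : x.im = 0) (w : ℂ) (t : ℝ) : (segPath x w t).im = t * w.im := by
  simp [segPath, hx]

theorem segInt_mul_cexp_eq_gaussianMixture (z₁ z₂ : ℂ) (ψ : ℂ → ℂ) (r : ℝ) :
    segInt z₁ z₂ (fun z => ψ z * Complex.exp (π * I * (r : ℂ) ^ 2 * z)) =
      gaussianMixture (volume.restrict (Ioc 0 1)) (fun t => (z₂ - z₁) * ψ (segPath z₁ z₂ t))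
        (segPath z₁ z₂) (r ^ 2) := by
  simp only [segInt, gaussianMixture, intervalIntegral.integral_of_le zero_le_one, mul_assoc,
    integral_const_mul, Complex.ofReal_pow]
  rfl

theorem isCuspidalWeight_segPath {ψ : ℂ → ℂ} {x w : ℂ} {c : ℝ} (hx : x.im = 0) (hw : 0 < w.im)
    (hc : 0 < c) (hψ : ContinuousOn ψ {z | 0 < z.im})
    (hO : (fun t => ψ (segPath x w t)) =O[𝓟 (Ioc 0 1)] fun t : ℝ => Real.exp (-c * t⁻¹)) :
    IsCuspidalWeight (volume.restrict (Ioc 0 1)) (fun t => (w - x) * ψ (segPath x w t))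
      (segPath x w) := by
  have him_pos (t : ℝ) (ht : t ∈ Ioc 0 1) : 0 < (segPath x w t).im := by
    rw [segPath_im hx]; exact mul_pos ht.1 hw
  have hmeas : AEStronglyMeasurable (fun t => (w - x) * ψ (segPath x w t))
      (volume.restrict (Ioc 0 1)) :=
    (continuousOn_const.mul (hψ.comp (continuous_segPath x w).continuousOn
      him_pos)).aestronglyMeasurable measurableSet_Ioc
  have hγ_meas : Measurable (segPath x w) := (continuous_segPath x w).measurable
  obtain ⟨K, hK, hψ_le⟩ := (hO.const_mul_left (w - x)).exists_nonneg
  rw [isBigOWith_principal] at hψ_le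
  refine ⟨hmeas, hγ_meas.aemeasurable, ae_restrict_of_forall_mem measurableSet_Ioc him_pos,
    ⟨‖x‖ + ‖w - x‖, ae_restrict_of_forall_mem measurableSet_Ioc fun t ht => ?_⟩, fun M => ?_⟩
  · refine (norm_add_le _ _).trans (add_le_add_right ?_ _)
    rw [norm_mul, Complex.norm_of_nonneg ht.1.le]
    exact mul_le_of_le_one_left (norm_nonneg _) ht.2
  · refine .of_bound (hmeas.norm.mul (hγ_meas.im.inv.pow_const M).aestronglyMeasurable)
      (K * (M.factorial * (c⁻¹ * w.im⁻¹) ^ M))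
      (ae_restrict_of_forall_mem measurableSet_Ioc fun t ht => ?_)
    have ht_pos : 0 < t := ht.1
    have hexp : (c * t⁻¹) ^ M * Real.exp (-c * t⁻¹) ≤ M.factorial := by
      rw [neg_mul, Real.exp_neg, ← div_eq_mul_inv, div_le_iff₀ (Real.exp_pos _)]
      exact (div_le_iff₀' (by positivity)).1 (Real.pow_div_factorial_le_exp _ (by positivity) M)
    rw [segPath_im hx, Real.norm_of_nonneg (by positivity)]
    calc ‖(w - x) * ψ (segPath x w t)‖ * (t * w.im)⁻¹ ^ M
        ≤ K * Real.exp (-c * t⁻¹) * (t * w.im)⁻¹ ^ M := by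
          gcongr; simpa using hψ_le t ht
      _ = K * ((c * t⁻¹) ^ M * Real.exp (-c * t⁻¹) * (c⁻¹ * w.im⁻¹) ^ M) := by
          simp only [mul_pow, inv_pow, mul_inv]; field_simp
      _ ≤ K * (M.factorial * (c⁻¹ * w.im⁻¹) ^ M) := by gcongr

end ContourIntegrals

section ThetaConstants

theorem theta00_eq_jacobiTheta₂ : theta00 = jacobiTheta₂ 0 := by
  ext z; simp [theta00, jacobiTheta₂, jacobiTheta₂_term]

theorem theta01_eq_jacobiTheta₂ : theta01 = jacobiTheta₂ (1 / 2) := by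
  ext z
  refine tsum_congr fun n => ?_
  rw [jacobiTheta₂_term, Complex.exp_add, ← Complex.exp_pi_mul_I, ← Complex.exp_int_mul]
  congr 2; ring

theorem theta10_eq_cexp_mul_jacobiTheta₂ (z : ℂ) :
    theta10 z = Complex.exp (π * I * z / 4) * jacobiTheta₂ (z / 2) z := by
  rw [theta10, jacobiTheta₂, ← tsum_mul_left]
  refine tsum_congr fun n => ?_
  rw [jacobiTheta₂_term, ← Complex.exp_add]
  congr 1; ring

theorem differentiableAt_theta00 {z : ℂ} (hz : 0 < z.im) : DifferentiableAt ℂ theta00 z := by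
  rw [theta00_eq_jacobiTheta₂]; exact differentiableAt_jacobiTheta₂_snd 0 hz

theorem differentiableAt_theta01 {z : ℂ} (hz : 0 < z.im) : DifferentiableAt ℂ theta01 z := by
  rw [theta01_eq_jacobiTheta₂]; exact differentiableAt_jacobiTheta₂_snd (1 / 2) hz

theorem differentiableAt_theta10 {z : ℂ} (hz : 0 < z.im) : DifferentiableAt ℂ theta10 z := by
  rw [funext theta10_eq_cexp_mul_jacobiTheta₂]
  have hΘ : DifferentiableAt ℂ (fun p : ℂ × ℂ => jacobiTheta₂ p.1 p.2) (z / 2, z) :=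
    (hasFDerivAt_jacobiTheta₂ (z / 2) hz).differentiableAt
  exact (by fun_prop : DifferentiableAt ℂ (fun z => Complex.exp (π * I * z / 4)) z).mul
    (hΘ.comp (f := fun z : ℂ => (z / 2, z)) z (by fun_prop))

theorem theta00_add_one (z : ℂ) : theta00 (z + 1) = theta01 z := by
  refine tsum_congr fun n => ?_
  rw [mul_add, Complex.exp_add, mul_comm, ← Complex.exp_pi_mul_I, ← Complex.exp_int_mul]
  congr 1
  obtain ⟨k, hk⟩ := Int.even_mul_pred_self n
  have hk' : (n : ℂ) * (n - 1) = k + k := mod_cast hk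
  exact Complex.exp_eq_exp_iff_exists_int.2 ⟨k, by linear_combination (π * I) * hk'⟩

theorem theta01_add_one (z : ℂ) : theta01 (z + 1) = theta00 z := by
  rw [← theta00_add_one, theta00_eq_jacobiTheta₂, add_assoc, one_add_one_eq_two,
    jacobiTheta₂_add_right]

theorem theta10_add_one (z : ℂ) : theta10 (z + 1) = Complex.exp (π * I / 4) * theta10 z := by
  rw [theta10, theta10, ← tsum_mul_left]
  refine tsum_congr fun n => ?_
  rw [← Complex.exp_add]
  obtain ⟨k, hk⟩ := Int.even_mul_succ_self n
  have hk' : (n : ℂ) * (n + 1) = k + k := mod_cast hk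
  exact Complex.exp_eq_exp_iff_exists_int.2 ⟨k, by linear_combination (π * I) * hk'⟩

theorem theta10_add_one_pow_four (z : ℂ) : theta10 (z + 1) ^ 4 = -theta10 z ^ 4 := by
  rw [theta10_add_one, mul_pow, ← Complex.exp_nat_mul, Nat.cast_ofNat,
    show 4 * (π * I / 4) = π * I by ring, Complex.exp_pi_mul_I, neg_one_mul]

theorem jacobiTheta₂_neg_inv_pow_four (w : ℂ) {z : ℂ} (hz : z ≠ 0) :
    jacobiTheta₂ (w / z) (-1 / z) ^ 4 * Complex.exp (-π * I * w ^ 2 / z) ^ 4 =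
      -z ^ 2 * jacobiTheta₂ w z ^ 4 := by
  have hpow : ((-I * z) ^ (1 / 2 : ℂ)) ^ 4 = -z ^ 2 := by
    rw [← Complex.cpow_mul_nat, show (1 / 2 : ℂ) * (4 : ℕ) = (2 : ℕ) by norm_num,
      Complex.cpow_natCast, mul_pow, neg_sq, Complex.I_sq, neg_one_mul]
  rw [jacobiTheta₂_functional_equation w z, mul_pow, mul_pow, div_pow, hpow]
  field_simp

theorem theta00_neg_inv_pow_four {z : ℂ} (hz : z ≠ 0) :
    theta00 (-1 / z) ^ 4 = -z ^ 2 * theta00 z ^ 4 := by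
  simpa [theta00_eq_jacobiTheta₂] using jacobiTheta₂_neg_inv_pow_four 0 hz

theorem theta01_neg_inv_pow_four {z : ℂ} (hz : z ≠ 0) :
    theta01 (-1 / z) ^ 4 = -z ^ 2 * theta10 z ^ 4 := by
  have h := jacobiTheta₂_neg_inv_pow_four (z / 2) hz
  have harg : z / 2 / z = 1 / 2 := by field_simp
  have hexp : -π * I * (z / 2) ^ 2 / z = -(π * I * z / 4) := by field_simp; ring
  rw [harg, hexp, Complex.exp_neg, inv_pow, mul_inv_eq_iff_eq_mul₀ (by simp)] at h
  rw [theta01_eq_jacobiTheta₂, h, theta10_eq_cexp_mul_jacobiTheta₂]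
  ring

theorem theta10_neg_inv_pow_four {z : ℂ} (hz : z ≠ 0) :
    theta10 (-1 / z) ^ 4 = -z ^ 2 * theta01 z ^ 4 := by
  have h := theta01_neg_inv_pow_four (z := -1 / z) (by simpa using hz)
  rw [show -1 / (-1 / z) = z by field_simp] at h
  rw [h]
  field_simp

end ThetaConstants

section ThetaEstimates

theorem rexp_neg_pi_mul_le_quarter {y : ℝ} (hy : 1 / 2 ≤ y) : Real.exp (-π * y) ≤ 1 / 4 := by
  have hlog : Real.log 4 ≤ 3 / 2 := by
    rw [show (4 : ℝ) = 2 ^ 2 by norm_num, Real.log_pow]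
    push_cast; linarith [Real.log_two_lt_d9]
  calc Real.exp (-π * y) ≤ Real.exp (-Real.log 4) := by
        gcongr; nlinarith [Real.pi_gt_three]
    _ = 1 / 4 := by rw [Real.exp_neg, Real.exp_log four_pos, one_div]

theorem norm_theta00_sub_one_le {z : ℂ} (hz : 1 / 2 ≤ z.im) :
    ‖theta00 z - 1‖ ≤ 8 / 3 * Real.exp (-π * z.im) := by
  refine (norm_jacobiTheta_sub_one_le (by linarith : 0 < z.im)).trans ?_
  have hq := rexp_neg_pi_mul_le_quarter hz
  refine mul_le_mul_of_nonneg_right ?_ (Real.exp_pos _).le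
  rw [div_le_iff₀ (by linarith)]
  linarith

theorem norm_theta01_sub_one_le {z : ℂ} (hz : 1 / 2 ≤ z.im) :
    ‖theta01 z - 1‖ ≤ 8 / 3 * Real.exp (-π * z.im) := by
  rw [← theta00_add_one]
  simpa using norm_theta00_sub_one_le (z := z + 1) (by simpa using hz)

theorem hasSum_nat_theta10 {z : ℂ} (hz : 0 < z.im) :
    HasSum (fun n : ℕ => 2 * Complex.exp (π * I * z / 4) *
      Complex.exp (π * I * (n * (n + 1) : ℝ) * z)) (theta10 z) := by
  have hterm (n : ℤ) : Complex.exp (π * I * z / 4) * jacobiTheta₂_term n (z / 2) z =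
      Complex.exp (π * I * z / 4) * Complex.exp (π * I * (n * (n + 1) : ℝ) * z) := by
    rw [jacobiTheta₂_term]
    congr 2; push_cast; ring
  have h := ((hasSum_jacobiTheta₂_term (z / 2) hz).mul_left
    (Complex.exp (π * I * z / 4))).nat_add_neg_add_one
  rw [← theta10_eq_cexp_mul_jacobiTheta₂] at h
  simp only [hterm] at h
  refine h.congr_fun fun n => ?_
  rw [two_mul, add_mul]
  congr 4; push_cast; ring

theorem norm_theta10_div_sub_one_le {z : ℂ} (hz : 1 / 2 ≤ z.im) :
    ‖theta10 z / (2 * Complex.exp (π * I * z / 4)) - 1‖ ≤ 1 / 3 := by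
  have hE_le : Real.exp (-π * z.im) ≤ 1 / 4 := rexp_neg_pi_mul_le_quarter hz
  set E := Real.exp (-π * z.im) with hE
  have hE_pos : 0 < E := Real.exp_pos _
  have hne : 2 * Complex.exp (π * I * z / 4) ≠ 0 := by simp
  have hsum := (hasSum_nat_theta10 (by linarith : 0 < z.im)).div_const
    (2 * Complex.exp (π * I * z / 4))
  simp only [mul_div_cancel_left₀ _ hne] at hsum
  have htail := (hasSum_nat_add_iff' 1).2 hsum
  have hgeom : HasSum (fun n : ℕ => E * E ^ n) (E * (1 - E)⁻¹) :=
    (hasSum_geometric_of_lt_one hE_pos.le (by linarith)).mul_left E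
  have hterm (n : ℕ) : ‖Complex.exp (π * I * (((n + 1 : ℕ) * ((n + 1 : ℕ) + 1) : ℝ) : ℂ) * z)‖ ≤
      E * E ^ n := by
    rw [norm_cexp_pi_mul_I, ← pow_succ', hE, ← Real.exp_nat_mul, Real.exp_le_exp]
    have : 0 ≤ π * z.im * ((n + 1) * (n + 1)) := by positivity
    push_cast; nlinarith
  have hle := htail.tsum_eq ▸ tsum_of_norm_bounded hgeom hterm
  rw [Finset.sum_range_one] at hle
  norm_num at hle
  refine hle.trans ?_
  rw [← div_eq_mul_inv, div_le_iff₀ (by linarith)]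
  linarith

theorem ne_zero_of_norm_sub_one_lt_one {w : ℂ} (h : ‖w - 1‖ < 1) : w ≠ 0 := by
  rintro rfl; simp at h

theorem theta00_mul_theta01_mul_theta10_ne_zero_of_half_le {z : ℂ} (hz : 1 / 2 ≤ z.im) :
    theta00 z * theta01 z * theta10 z ≠ 0 := by
  have hq := rexp_neg_pi_mul_le_quarter hz
  have h00 : theta00 z ≠ 0 :=
    ne_zero_of_norm_sub_one_lt_one ((norm_theta00_sub_one_le hz).trans_lt (by linarith))
  have h01 : theta01 z ≠ 0 :=
    ne_zero_of_norm_sub_one_lt_one ((norm_theta01_sub_one_le hz).trans_lt (by linarith))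
  have h10 : theta10 z / (2 * Complex.exp (π * I * z / 4)) ≠ 0 :=
    ne_zero_of_norm_sub_one_lt_one ((norm_theta10_div_sub_one_le hz).trans_lt (by norm_num))
  exact mul_ne_zero (mul_ne_zero h00 h01) (div_ne_zero_iff.1 h10).1

end ThetaEstimates

section ThetaNonvanishing

theorem forall_im_pos_of_modular_invariant {p : ℂ → Prop}
    (hT : ∀ z : ℂ, 0 < z.im → (p (z + 1) ↔ p z)) (hS : ∀ z : ℂ, 0 < z.im → (p (-1 / z) ↔ p z))
    (hp : ∀ z : ℂ, √3 / 2 ≤ z.im → p z) (z : ℂ) (hz : 0 < z.im) : p z := by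
  have hSL (g : Matrix.SpecialLinearGroup (Fin 2) ℤ) : ∀ τ : UpperHalfPlane,
      p ↑(g • τ) ↔ p ↑τ := by
    have hg : g ∈ Subgroup.closure {ModularGroup.S, ModularGroup.T} := by
      simp [SpecialLinearGroup.SL2Z_generators]
    induction hg using Subgroup.closure_induction with
    | mem g hg =>
      intro τ
      rcases hg with rfl | rfl
      · rw [UpperHalfPlane.modular_S_smul, ← hS τ τ.im_pos, neg_div, one_div, ← inv_neg]
      · rw [UpperHalfPlane.modular_T_smul, ← hT τ τ.im_pos, UpperHalfPlane.coe_vadd, add_comm]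
        simp
    | one => simp
    | mul g h _ _ hg hh => intro τ; rw [mul_smul, hg, hh]
    | inv g _ hg => intro τ; rw [← hg (g⁻¹ • τ), smul_inv_smul]
  obtain ⟨g, hg⟩ := ModularGroup.exists_smul_mem_fd ⟨z, hz⟩
  refine (hSL g ⟨z, hz⟩).1 (hp _ ?_)
  have him := ModularGroup.three_le_four_mul_im_sq_of_mem_fd hg
  have him_pos := (g • (⟨z, hz⟩ : UpperHalfPlane)).im_pos
  rw [UpperHalfPlane.coe_im, div_le_iff₀ two_pos]
  exact Real.sqrt_le_iff.2 ⟨mul_nonneg him_pos.le zero_le_two, by linarith⟩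

theorem theta00_mul_theta01_mul_theta10_ne_zero {z : ℂ} (hz : 0 < z.im) :
    theta00 z * theta01 z * theta10 z ≠ 0 := by
  refine forall_im_pos_of_modular_invariant (p := fun z => theta00 z * theta01 z * theta10 z ≠ 0)
    (fun z _ => ?_) (fun z hz => ?_)
    (fun z hz => theta00_mul_theta01_mul_theta10_ne_zero_of_half_le ?_) z hz
  · rw [← pow_ne_zero_iff four_ne_zero, ← pow_ne_zero_iff four_ne_zero (a := _ * theta10 z)]
    simp only [mul_pow, theta00_add_one, theta01_add_one, theta10_add_one_pow_four, mul_neg,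
      neg_ne_zero, mul_comm (theta01 z ^ 4)]
  · have hz0 : z ≠ 0 := by rintro rfl; simp at hz
    rw [← pow_ne_zero_iff four_ne_zero, ← pow_ne_zero_iff four_ne_zero (a := _ * theta10 z)]
    simp only [mul_pow, theta00_neg_inv_pow_four hz0, theta01_neg_inv_pow_four hz0,
      theta10_neg_inv_pow_four hz0, mul_ne_zero_iff, neg_ne_zero]
    have hz_sq : z ^ 2 ≠ 0 := pow_ne_zero 2 hz0
    tauto
  · linarith [Real.one_le_sqrt.2 (by norm_num : (1 : ℝ) ≤ 3)]

theorem theta00_ne_zero {z : ℂ} (hz : 0 < z.im) : theta00 z ≠ 0 :=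
  left_ne_zero_of_mul (left_ne_zero_of_mul (theta00_mul_theta01_mul_theta10_ne_zero hz))

theorem theta01_ne_zero {z : ℂ} (hz : 0 < z.im) : theta01 z ≠ 0 :=
  right_ne_zero_of_mul (left_ne_zero_of_mul (theta00_mul_theta01_mul_theta10_ne_zero hz))

theorem theta10_ne_zero {z : ℂ} (hz : 0 < z.im) : theta10 z ≠ 0 :=
  right_ne_zero_of_mul (theta00_mul_theta01_mul_theta10_ne_zero hz)

end ThetaNonvanishing

section NegInv

theorem neg_one_div_im (z : ℂ) : (-1 / z).im = z.im / Complex.normSq z := by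
  simp [neg_div]

theorem neg_one_div_im_pos {z : ℂ} : 0 < (-1 / z).im ↔ 0 < z.im := by
  rcases eq_or_ne z 0 with rfl | hz
  · simp
  · rw [neg_one_div_im, div_pos_iff_of_pos_right (Complex.normSq_pos.2 hz)]

theorem neg_one_div_ofReal_mul_im (t : ℝ) (u : ℂ) : (-1 / (t * u)).im = t⁻¹ * (-1 / u).im := by
  rw [← Complex.im_ofReal_mul, Complex.ofReal_inv]
  congr 1
  rw [div_mul_eq_div_div, div_right_comm, div_eq_inv_mul]

end NegInv

section Psi

theorem theta10_add_one_pow_eight (z : ℂ) : theta10 (z + 1) ^ 8 = theta10 z ^ 8 := by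
  rw [show 8 = 4 * 2 from rfl, pow_mul, pow_mul, theta10_add_one_pow_four, neg_sq]

theorem psiI_add_one (z : ℂ) : psiI (z + 1) = psiT z := by
  rw [psiI, psiT, theta10_add_one_pow_eight, theta10_add_one_pow_four, theta00_add_one,
    theta01_add_one]
  ring

theorem psiT_add_one (z : ℂ) : psiT (z + 1) = psiI z := by
  rw [psiI, psiT, theta10_add_one_pow_eight, theta10_add_one_pow_four, theta00_add_one,
    theta01_add_one]
  ring

theorem sq_mul_psiT_neg_inv {z : ℂ} (hz : 0 < z.im) : z ^ 2 * psiT (-1 / z) = -psiT z := by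
  have hz0 : z ≠ 0 := by rintro rfl; simp at hz
  have h01 := theta01_ne_zero hz
  have h10 := theta10_ne_zero hz
  simp only [psiT, show 8 = 4 * 2 from rfl, pow_mul, theta00_neg_inv_pow_four hz0,
    theta01_neg_inv_pow_four hz0, theta10_neg_inv_pow_four hz0]
  field_simp
  ring

theorem sq_mul_psiI_neg_inv {z : ℂ} (hz : 0 < z.im) : z ^ 2 * psiI (-1 / z) = psiS z := by
  have hz0 : z ≠ 0 := by rintro rfl; simp at hz
  have h00 := theta00_ne_zero hz
  have h01 := theta01_ne_zero hz
  simp only [psiI, psiS, show 8 = 4 * 2 from rfl, pow_mul, theta00_neg_inv_pow_four hz0,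
    theta01_neg_inv_pow_four hz0, theta10_neg_inv_pow_four hz0]
  field_simp
  ring

theorem sq_mul_psiS_neg_inv {z : ℂ} (hz : 0 < z.im) : z ^ 2 * psiS (-1 / z) = psiI z := by
  have hz0 : z ≠ 0 := by rintro rfl; simp at hz
  rw [← sq_mul_psiI_neg_inv (neg_one_div_im_pos.2 hz), show -1 / (-1 / z) = z by field_simp]
  field_simp

theorem differentiableAt_psiI {z : ℂ} (hz : 0 < z.im) : DifferentiableAt ℂ psiI z := by
  have h00 := differentiableAt_theta00 hz
  have h01 := differentiableAt_theta01 hz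
  have h10 := differentiableAt_theta10 hz
  exact ((((h00.pow 4).add (h01.pow 4)).const_mul 128).div (h10.pow 8)
    (pow_ne_zero 8 (theta10_ne_zero hz))).add
    ((((h01.pow 4).sub (h10.pow 4)).const_mul 128).div (h00.pow 8)
      (pow_ne_zero 8 (theta00_ne_zero hz)))

theorem differentiableAt_psiT {z : ℂ} (hz : 0 < z.im) : DifferentiableAt ℂ psiT z := by
  rw [← funext psiI_add_one]
  exact differentiableAt_comp_add_const.2 (differentiableAt_psiI (by simpa using hz))

end Psi

section PsiEstimates

theorem isBigO_pow_sub_pow {α 𝕜 : Type*} [NormedField 𝕜] {l : Filter α} {u v : α → 𝕜} {q : α → ℝ}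
    (hu : u =O[l] fun _ => (1 : ℝ)) (hv : v =O[l] fun _ => (1 : ℝ))
    (huv : (fun x => u x - v x) =O[l] q) (n : ℕ) : (fun x => u x ^ n - v x ^ n) =O[l] q := by
  induction n with
  | zero => simpa using isBigO_zero q l
  | succ n ih =>
    have hsplit (x : α) :
        u x ^ (n + 1) - v x ^ (n + 1) = u x ^ n * (u x - v x) + (u x ^ n - v x ^ n) * v x := by
      ring
    simp only [hsplit]
    exact (by simpa using (hu.pow n).mul huv : _ =O[l] q).add (by simpa using ih.mul hv)

theorem pow_isBigO_one {α 𝕜 : Type*} [NormedField 𝕜] {l : Filter α} {u : α → 𝕜}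
    (hu : u =O[l] fun _ => (1 : ℝ)) (n : ℕ) : (fun x => u x ^ n) =O[l] fun _ => (1 : ℝ) := by
  simpa only [one_pow] using hu.pow n

theorem isBigO_one_of_sub_one_isBigO_one {α 𝕜 : Type*} [NormedField 𝕜] {l : Filter α} {u : α → 𝕜}
    (hu : (fun x => u x - 1) =O[l] fun _ => (1 : ℝ)) : u =O[l] fun _ => (1 : ℝ) := by
  simpa using hu.add (isBigO_const_const (1 : 𝕜) one_ne_zero l)

theorem theta00_sub_one_isBigO :
    (fun z => theta00 z - 1) =O[𝓟 {z | 1 / 2 ≤ z.im}] fun z => Real.exp (-π * z.im) :=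
  isBigO_principal.2 ⟨8 / 3, fun _ hz => by simpa using norm_theta00_sub_one_le hz⟩

theorem theta01_sub_one_isBigO :
    (fun z => theta01 z - 1) =O[𝓟 {z | 1 / 2 ≤ z.im}] fun z => Real.exp (-π * z.im) :=
  isBigO_principal.2 ⟨8 / 3, fun _ hz => by simpa using norm_theta01_sub_one_le hz⟩

theorem theta10_pow_four_isBigO :
    (fun z => theta10 z ^ 4) =O[𝓟 {z | 1 / 2 ≤ z.im}] fun z => Real.exp (-π * z.im) := by
  refine isBigO_principal.2 ⟨(2 * (4 / 3)) ^ 4, fun z hz => ?_⟩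
  set w := theta10 z / (2 * Complex.exp (π * I * z / 4)) with hw
  have hw_le : ‖w‖ ≤ 4 / 3 := by
    have h := norm_sub_norm_le w 1
    rw [norm_one] at h
    linarith [norm_theta10_div_sub_one_le hz]
  have hexp : ‖Complex.exp (π * I * z / 4)‖ ^ 4 = Real.exp (-π * z.im) := by
    rw [← norm_pow, ← Complex.exp_nat_mul, Complex.norm_exp]
    congr 1
    simp; ring
  have htheta : theta10 z = 2 * w * Complex.exp (π * I * z / 4) := by
    rw [hw]; field_simp [Complex.exp_ne_zero]
  rw [htheta, norm_pow, norm_mul, mul_pow, hexp, Real.norm_of_nonneg (Real.exp_pos _).le, norm_mul,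
    Complex.norm_ofNat]
  gcongr

theorem inv_isBigO_one_of_norm_sub_one_le {α 𝕜 : Type*} [NormedField 𝕜] {s : Set α} {u : α → 𝕜}
    {c : ℝ} (hc : c < 1) (hu : ∀ x ∈ s, ‖u x - 1‖ ≤ c) :
    (fun x => (u x)⁻¹) =O[𝓟 s] fun _ => (1 : ℝ) := by
  refine isBigO_principal.2 ⟨(1 - c)⁻¹, fun x hx => ?_⟩
  have h := norm_sub_norm_le 1 (u x)
  rw [norm_one, norm_sub_rev] at h
  rw [norm_inv, norm_one, mul_one]
  exact inv_anti₀ (by linarith) (by linarith [hu x hx])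

theorem rexp_neg_pi_mul_im_isBigO_one :
    (fun z : ℂ => Real.exp (-π * z.im)) =O[𝓟 {z | 1 / 2 ≤ z.im}] fun _ => (1 : ℝ) :=
  isBigO_principal.2 ⟨1 / 4, fun _ hz => by simpa using rexp_neg_pi_mul_le_quarter hz⟩

theorem theta00_isBigO_one : theta00 =O[𝓟 {z | 1 / 2 ≤ z.im}] fun _ => (1 : ℝ) :=
  isBigO_one_of_sub_one_isBigO_one (theta00_sub_one_isBigO.trans rexp_neg_pi_mul_im_isBigO_one)

theorem theta01_isBigO_one : theta01 =O[𝓟 {z | 1 / 2 ≤ z.im}] fun _ => (1 : ℝ) :=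
  isBigO_one_of_sub_one_isBigO_one (theta01_sub_one_isBigO.trans rexp_neg_pi_mul_im_isBigO_one)

theorem theta00_inv_isBigO_one :
    (fun z => (theta00 z)⁻¹) =O[𝓟 {z | 1 / 2 ≤ z.im}] fun _ => (1 : ℝ) :=
  inv_isBigO_one_of_norm_sub_one_le (c := 2 / 3) (by norm_num) fun _ hz =>
    (norm_theta00_sub_one_le hz).trans (by linarith [rexp_neg_pi_mul_le_quarter hz])

theorem theta01_inv_isBigO_one :
    (fun z => (theta01 z)⁻¹) =O[𝓟 {z | 1 / 2 ≤ z.im}] fun _ => (1 : ℝ) :=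
  inv_isBigO_one_of_norm_sub_one_le (c := 2 / 3) (by norm_num) fun _ hz =>
    (norm_theta01_sub_one_le hz).trans (by linarith [rexp_neg_pi_mul_le_quarter hz])

theorem psiS_eq {z : ℂ} (hz : 0 < z.im) :
    psiS z = -128 * ((theta00 z ^ 12 - theta01 z ^ 12) +
      theta10 z ^ 4 * (theta00 z ^ 8 + theta01 z ^ 8)) *
        ((theta00 z)⁻¹ ^ 8 * (theta01 z)⁻¹ ^ 8) := by
  have h00 := theta00_ne_zero hz
  have h01 := theta01_ne_zero hz
  rw [psiS]
  field_simp
  ring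

theorem psiS_isBigO : psiS =O[𝓟 {z | 1 / 2 ≤ z.im}] fun z => Real.exp (-π * z.im) := by
  have hsub : (fun z => theta00 z - theta01 z) =O[𝓟 {z | 1 / 2 ≤ z.im}]
      fun z => Real.exp (-π * z.im) :=
    (theta00_sub_one_isBigO.sub theta01_sub_one_isBigO).congr_left fun z => by ring
  -- Both summands vanish at the cusp: the constant terms of `θ00¹²` and `θ01¹²` cancel.
  have hnum := (isBigO_pow_sub_pow theta00_isBigO_one theta01_isBigO_one hsub 12).add
    ((theta10_pow_four_isBigO.mul ((pow_isBigO_one theta00_isBigO_one 8).add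
      (pow_isBigO_one theta01_isBigO_one 8))).congr_right fun _ => mul_one _)
  have hpsi := (hnum.const_mul_left (-128)).mul
    ((pow_isBigO_one theta00_inv_isBigO_one 8).mul (pow_isBigO_one theta01_inv_isBigO_one 8))
  exact hpsi.congr' (eventually_principal.2 fun z hz => (psiS_eq (by linarith [hz.out])).symm)
    (.of_eq (funext fun _ => by ring))

theorem psiI_isBigO : psiI =O[𝓟 {z | 1 / 2 ≤ (-1 / z).im}]
    fun z => Real.exp (-π * (-1 / z).im) := by
  have hS : (fun z => psiS (-1 / z)) =O[𝓟 {z | 1 / 2 ≤ (-1 / z).im}]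
      fun z => Real.exp (-π * (-1 / z).im) :=
    psiS_isBigO.comp_tendsto (tendsto_principal_principal.2 fun _ hz => hz)
  have hsq : (fun z : ℂ => z ^ 2) =O[𝓟 {z | 1 / 2 ≤ (-1 / z).im}] fun _ => (1 : ℝ) := by
    refine isBigO_principal.2 ⟨2 ^ 2, fun z hz => ?_⟩
    have h : 1 / 2 ≤ ‖z‖⁻¹ := by
      simpa using hz.out.trans ((le_abs_self _).trans (Complex.abs_im_le_norm _))
    have hz_le : ‖z‖ ≤ 2 := by simpa using inv_anti₀ one_half_pos h
    rw [norm_pow, norm_one, mul_one]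
    gcongr
  refine (hsq.mul hS).congr' (eventually_principal.2 fun z hz => ?_) (by simp)
  exact sq_mul_psiS_neg_inv (neg_one_div_im_pos.1 (by linarith [hz.out]))

end PsiEstimates

section Cuspidality

theorem psiI_comp_isBigO {γ : ℝ → ℂ} {c : ℝ} (hc : 1 / 2 ≤ c)
    (hγ : ∀ t, (-1 / γ t).im = c * t⁻¹) :
    (fun t => psiI (γ t)) =O[𝓟 (Ioc 0 1)] fun t => Real.exp (-(π * c) * t⁻¹) := by
  have hmaps : MapsTo γ (Ioc 0 1) {z | 1 / 2 ≤ (-1 / z).im} := fun t ht => by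
    have := (one_le_inv₀ ht.1).2 ht.2
    change 1 / 2 ≤ (-1 / γ t).im
    rw [hγ]
    nlinarith
  refine (psiI_isBigO.comp_tendsto (tendsto_principal_principal.2 hmaps)).congr_right fun t => ?_
  rw [Function.comp_apply, hγ, neg_mul, neg_mul, mul_assoc]

theorem isCuspidalWeight_psiI :
    IsCuspidalWeight (volume.restrict (Ioc 0 1)) (fun t => (I - 0) * psiI (segPath 0 I t))
      (segPath 0 I) := by
  refine isCuspidalWeight_segPath (by simp) (by simp) (mul_pos Real.pi_pos one_pos)
    (fun z hz => (differentiableAt_psiI hz).continuousAt.continuousWithinAt)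
    (psiI_comp_isBigO (by norm_num) fun t => ?_)
  rw [show segPath 0 I t = t * I by simp [segPath], neg_one_div_ofReal_mul_im]
  simp

theorem segPath_neg_one_I_add_one (t : ℝ) : segPath (-1) I t + 1 = t * (I + 1) := by
  rw [segPath]; ring

theorem neg_one_div_I_add_one_im : (-1 / (I + 1)).im = 1 / 2 := by
  rw [neg_one_div_im]; norm_num [Complex.normSq_apply]

theorem isCuspidalWeight_psiT :
    IsCuspidalWeight (volume.restrict (Ioc 0 1)) (fun t => (I - -1) * psiT (segPath (-1) I t))
      (segPath (-1) I) := by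
  refine isCuspidalWeight_segPath (by simp) (by simp) (mul_pos Real.pi_pos one_half_pos)
    (fun z hz => (differentiableAt_psiT hz).continuousAt.continuousWithinAt) ?_
  simp_rw [← psiI_add_one]
  refine psiI_comp_isBigO le_rfl fun t => ?_
  rw [segPath_neg_one_I_add_one, neg_one_div_ofReal_mul_im, neg_one_div_I_add_one_im, mul_comm]

end Cuspidality

section Horoball

theorem mem_ball_add_I_one_iff {x z : ℂ} :
    z ∈ Metric.ball (x + I) 1 ↔ 1 / 2 < (-1 / (z - x)).im := by
  have hnorm : dist z (x + I) ^ 2 = Complex.normSq (z - x) - 2 * (z - x).im + 1 := by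
    rw [dist_eq_norm, ← sub_sub, Complex.sq_norm, Complex.normSq_sub]
    simp; ring
  rw [Metric.mem_ball, ← sq_lt_one_iff₀ dist_nonneg, hnorm, neg_one_div_im]
  rcases eq_or_ne (z - x) 0 with h | h
  · simp [h]
  · rw [lt_div_iff₀ (Complex.normSq_pos.2 h)]
    constructor <;> intro <;> linarith

theorem im_pos_of_mem_ball_one_add_I {z : ℂ} (hz : z ∈ Metric.ball (1 + I) 1) : 0 < z.im := by
  have h := neg_one_div_im_pos.1 (one_half_pos.trans (mem_ball_add_I_one_iff.1 hz))
  simpa using h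

theorem differentiableOn_psiT_mul_cexp (u : ℝ) :
    DifferentiableOn ℂ (fun z => psiT z * Complex.exp (π * I * u * z)) (Metric.ball (1 + I) 1) :=
  fun z hz => ((differentiableAt_psiT (im_pos_of_mem_ball_one_add_I hz)).mul
    (by fun_prop)).differentiableWithinAt

theorem exists_norm_psiT_mul_cexp_le {u : ℝ} (hu : 0 ≤ u) :
    ∃ M, ∀ z ∈ Metric.ball (1 + I) 1, ‖psiT z * Complex.exp (π * I * u * z)‖ ≤ M := by
  obtain ⟨M, hM_nonneg, hM⟩ := psiI_isBigO.exists_nonneg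
  rw [isBigOWith_principal] at hM
  refine ⟨M, fun z hz => ?_⟩
  have hz_im := (im_pos_of_mem_ball_one_add_I hz).le
  have hhoro := mem_ball_add_I_one_iff.1 hz
  have hψ : ‖psiT z‖ ≤ M := by
    rw [← sub_add_cancel z 1, psiT_add_one]
    refine (hM (z - 1) hhoro.le).trans (mul_le_of_le_one_right hM_nonneg ?_)
    rw [Real.norm_of_nonneg (Real.exp_pos _).le, Real.exp_le_one_iff, neg_mul]
    exact neg_nonpos.2 (mul_nonneg Real.pi_pos.le (by linarith))
  have hexp : ‖Complex.exp (π * I * u * z)‖ ≤ 1 := by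
    rw [norm_cexp_pi_mul_I, Real.exp_le_one_iff]
    exact neg_nonpos.2 (by positivity)
  rw [norm_mul]
  exact (mul_le_of_le_one_right (norm_nonneg _) hexp).trans hψ

theorem segPath_neg_one_I_ne_zero (t : ℝ) : segPath (-1) I t ≠ 0 := fun h => by
  have him : t = 0 := by simpa [segPath_im] using congrArg Complex.im h
  simp [segPath, him] at h

theorem hasDerivAt_neg_one_div_segPath (t : ℝ) :
    HasDerivAt (fun t => -1 / segPath (-1) I t) ((I - -1) / segPath (-1) I t ^ 2) t := by
  have h := (hasDerivAt_segPath (-1) I t).inv (segPath_neg_one_I_ne_zero t)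
  simp_rw [neg_div, one_div]
  exact h.neg.congr_deriv (by rw [neg_div, neg_neg])

theorem neg_one_div_segPath_mem_ball {t : ℝ} (ht : t ∈ Ioo 0 1) :
    -1 / segPath (-1) I t ∈ Metric.ball (1 + I) 1 := by
  have hne := segPath_neg_one_I_ne_zero t
  have hne' : segPath (-1) I t + 1 ≠ 0 := by
    rw [segPath_neg_one_I_add_one]
    exact mul_ne_zero (by exact_mod_cast ht.1.ne') fun h => by simpa using congrArg Complex.im h
  have hinv : -1 / (-1 / segPath (-1) I t - 1) = 1 + -1 / (segPath (-1) I t + 1) := by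
    have : -1 - segPath (-1) I t ≠ 0 := fun h => hne' (by linear_combination -h)
    field_simp
    ring
  rw [mem_ball_add_I_one_iff, hinv, Complex.add_im, Complex.one_im, zero_add,
    segPath_neg_one_I_add_one, neg_one_div_ofReal_mul_im, neg_one_div_I_add_one_im]
  linarith [(one_lt_inv₀ ht.1).2 ht.2]

theorem segPath_one_I_mem_ball {t : ℝ} (ht : t ∈ Ioo 0 1) :
    segPath 1 I t ∈ Metric.ball (1 + I) 1 := by
  have him : (-1 / (I - 1)).im = 1 / 2 := by
    rw [neg_one_div_im]; norm_num [Complex.normSq_apply]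
  rw [mem_ball_add_I_one_iff, show segPath 1 I t - 1 = t * (I - 1) by rw [segPath]; ring,
    neg_one_div_ofReal_mul_im, him]
  linarith [(one_lt_inv₀ ht.1).2 ht.2]

/- Both paths run from `1` to `i` inside the horoball at `1`, on which the integrand is bounded,
although `1` lies on its boundary. -/
theorem intervalIntegral_neg_one_div_segPath_eq {u : ℝ} (hu : 0 ≤ u) :
    ∫ t in (0 : ℝ)..1, (I - -1) / segPath (-1) I t ^ 2 *
        (psiT (-1 / segPath (-1) I t) * Complex.exp (π * I * u * (-1 / segPath (-1) I t))) =
      ∫ t in (0 : ℝ)..1, (I - 1) *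
        (psiT (segPath 1 I t) * Complex.exp (π * I * u * segPath 1 I t)) := by
  obtain ⟨M, hM⟩ := exists_norm_psiT_mul_cexp_le hu
  have hγ := continuous_segPath (-1) I
  have hne := segPath_neg_one_I_ne_zero
  exact intervalIntegral_deriv_mul_comp_eq_of_endpoints_eq (convex_ball _ _) Metric.isOpen_ball
    (differentiableOn_psiT_mul_cexp u) hM zero_le_one
    (continuous_const.div hγ hne).continuousOn
    (continuous_const.div (hγ.pow 2) fun t => pow_ne_zero 2 (hne t)).continuousOn
    (fun t _ => hasDerivAt_neg_one_div_segPath t) (fun _ => neg_one_div_segPath_mem_ball)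
    (continuous_segPath 1 I).continuousOn continuousOn_const
    (fun t _ => hasDerivAt_segPath 1 I t) (fun _ => segPath_one_I_mem_ball)
    (by simp [segPath]) (by simp [segPath])

end Horoball

section Eigenfunction

theorem I_div_cpow_eight_div_two (z : ℂ) : (I / z) ^ ((8 : ℕ) / 2 : ℂ) = (z ^ 4)⁻¹ := by
  rw [show ((8 : ℕ) / 2 : ℂ) = (4 : ℕ) by norm_num, Complex.cpow_natCast, div_pow,
    Complex.I_pow_four, one_div]

variable {V : Type*} [NormedAddCommGroup V] [InnerProductSpace ℝ V]

variable (V) in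
/-- The part `g` of `b` given by the contour integrals from `-1` to `i` and from `0` to `i`, as a
Schwartz function on `V`. The remaining part of `b` is `-𝓕 g`. -/
noncomputable def schwartzHalf : 𝓢(V, ℂ) :=
  isCuspidalWeight_psiT.schwartz V - (2 : ℂ) • isCuspidalWeight_psiI.schwartz V

theorem schwartzHalf_neg (x : V) : schwartzHalf V (-x) = schwartzHalf V x := by
  simp only [schwartzHalf, sub_apply, smul_apply, IsCuspidalWeight.schwartz_apply, norm_neg]

variable [FiniteDimensional ℝ V] [MeasurableSpace V] [BorelSpace V]

theorem fourier_schwartz_psiT (hV : Module.finrank ℝ V = 8) (y : V) :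
    𝓕 (isCuspidalWeight_psiT.schwartz V) y =
      -segInt 1 I (fun z => psiT z * Complex.exp (π * I * (‖y‖ : ℂ) ^ 2 * z)) := by
  have hintegrand (t : ℝ) (ht : t ∈ Ioc 0 1) :
      (I - -1) * psiT (segPath (-1) I t) * (segPath (-1) I t ^ 4)⁻¹ *
          Complex.exp (π * I * (‖y‖ ^ 2 : ℝ) * (-1 / segPath (-1) I t)) =
        -((I - -1) / segPath (-1) I t ^ 2 * (psiT (-1 / segPath (-1) I t) *
          Complex.exp (π * I * (‖y‖ ^ 2 : ℝ) * (-1 / segPath (-1) I t)))) := by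
    have hne := segPath_neg_one_I_ne_zero t
    have him : 0 < (segPath (-1) I t).im := by simpa [segPath_im] using ht.1
    rw [← neg_neg (psiT (segPath (-1) I t)), ← sq_mul_psiT_neg_inv him]
    field_simp
  rw [isCuspidalWeight_psiT.fourier_schwartz_apply, hV]
  simp_rw [I_div_cpow_eight_div_two]
  rw [gaussianMixture, setIntegral_congr_fun measurableSet_Ioc hintegrand, integral_neg,
    ← intervalIntegral.integral_of_le zero_le_one,
    intervalIntegral_neg_one_div_segPath_eq (sq_nonneg ‖y‖), intervalIntegral.integral_const_mul,
    Complex.ofReal_pow]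
  rfl

theorem fourier_schwartz_psiI (hV : Module.finrank ℝ V = 8) (y : V) :
    𝓕 (isCuspidalWeight_psiI.schwartz V) y =
      -rayIntFrom 1 (fun z => psiS z * Complex.exp (π * I * (‖y‖ : ℂ) ^ 2 * z)) := by
  have hintegrand (s : ℝ) (hs : s ∈ Ioi 1) :
      (s ^ 2)⁻¹ • ((I - 0) * psiI (segPath 0 I s⁻¹) * (segPath 0 I s⁻¹ ^ 4)⁻¹ *
          Complex.exp (π * I * (‖y‖ ^ 2 : ℝ) * (-1 / segPath 0 I s⁻¹))) =
        -(I * (psiS (I * s) * Complex.exp (π * I * (‖y‖ : ℂ) ^ 2 * (I * s)))) := by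
    have hs_pos : 0 < s := one_pos.trans hs
    have hs_ne : (s : ℂ) ≠ 0 := by exact_mod_cast hs_pos.ne'
    have hneg_inv : -1 / segPath 0 I s⁻¹ = I * s := by
      simp [segPath, neg_div, mul_comm]
    have him : 0 < (segPath 0 I s⁻¹).im := by simpa [segPath_im] using hs_pos
    rw [← sq_mul_psiS_neg_inv him, hneg_inv, Complex.ofReal_pow, Complex.real_smul]
    simp only [segPath]
    push_cast
    field_simp
    simp
  rw [isCuspidalWeight_psiI.fourier_schwartz_apply, hV]
  simp_rw [I_div_cpow_eight_div_two]
  rw [gaussianMixture, show Ioc (0 : ℝ) 1 = Ioc 0 1⁻¹ by rw [inv_one],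
    setIntegral_Ioc_zero_inv_eq_setIntegral_Ioi _ one_pos,
    setIntegral_congr_fun measurableSet_Ioi hintegrand, integral_neg, integral_const_mul]
  rfl

theorem bRad_norm_eq_schwartzHalf_sub_fourier (hV : Module.finrank ℝ V = 8) (x : V) :
    bRad ‖x‖ = (schwartzHalf V - 𝓕 (schwartzHalf V)) x := by
  rw [bRad, segInt_mul_cexp_eq_gaussianMixture (-1), segInt_mul_cexp_eq_gaussianMixture 0,
    ← isCuspidalWeight_psiT.schwartz_apply, ← isCuspidalWeight_psiI.schwartz_apply, schwartzHalf,
    schwartz_fourier_sub, FourierTransform.fourier_smul]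
  simp only [sub_apply, smul_apply, smul_eq_mul,
    fourier_schwartz_psiT hV, fourier_schwartz_psiI hV]
  ring

end Eigenfunction

/-- **Proposition 5.** The function `b : ℝ⁸ → ℂ` defined by the contour integrals above is a
Schwartz function and is a `−1`-eigenfunction of the Fourier transform: `b̂ = −b`. -/
theorem bFn_schwartz_and_fourier_eigenfunction :
    (∃ S : SchwartzMap (EuclideanSpace ℝ (Fin 8)) ℂ, ∀ x, S x = bFn x) ∧
    (∀ x : EuclideanSpace ℝ (Fin 8), 𝓕 bFn x = -bFn x) := by
  set g : 𝓢(EuclideanSpace ℝ (Fin 8), ℂ) := schwartzHalf _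
  have hb : ⇑(g - 𝓕 g) = bFn := funext fun x =>
    (bRad_norm_eq_schwartzHalf_sub_fourier finrank_euclideanSpace_fin x).symm
  refine ⟨⟨g - 𝓕 g, congrFun hb⟩, fun x => ?_⟩
  rw [← hb, ← SchwartzMap.fourier_coe, schwartz_fourier_sub_fourier_of_even schwartzHalf_neg,
    neg_apply]
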